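/- arXiv:2401.03820 — 2 statements merged into one kernel-verified Lean document; each statement's English description precedes it below -/
import Mathlib

section
/- Let Σ₁ = λU₁U₁ᵀ + σ²I_p and Σ₂ = λU₂U₂ᵀ + σ²I_p with U₁, U₂ ∈ O_{p,r} and ‖U₁U₁ᵀ − U₂U₂ᵀ‖_F ≤ ε₀. Then KL(N(0,Σ₁) ‖ N(0,Σ₂)) ≤ (1/2)·(λ²/(σ²(σ²+λ)))·ε₀², and consequently by Pinsker's inequality TV(N(0,Σ₁), N(0,Σ₂)) ≤ (ε₀/2)·√(λ²/(σ²(σ²+λ))). -/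
open Matrix MeasureTheory

/-- The density of the centered multivariate Gaussian `N(0, S)` (for `S` positive
definite) with respect to Lebesgue measure on `ℝ^p`. -/
noncomputable def gaussianDensity {p : ℕ} (S : Matrix (Fin p) (Fin p) ℝ)
    (x : EuclideanSpace ℝ (Fin p)) : ℝ :=
  ((2 * Real.pi) ^ p * S.det) ^ (-(1 : ℝ) / 2) *
    Real.exp (-(1 / 2) * ((fun i => x i) ⬝ᵥ S⁻¹.mulVec fun i => x i))

/-- The centered multivariate Gaussian measure `N(0, S)` on `ℝ^p`. -/
noncomputable def gaussianMeasure {p : ℕ} (S : Matrix (Fin p) (Fin p) ℝ) :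
    Measure (EuclideanSpace ℝ (Fin p)) :=
  volume.withDensity fun x => ENNReal.ofReal (gaussianDensity S x)

/-- The Kullback–Leibler divergence `KL(P‖Q) = ∫ log(dP/dQ) dP`. -/
noncomputable def klDiv {α : Type*} [MeasurableSpace α] (P Q : Measure α) : ℝ :=
  ∫ x, Real.log (P.rnDeriv Q x).toReal ∂P

/-- Total variation distance `TV(P, Q) = sup_E |P(E) − Q(E)|` over measurable sets. -/
noncomputable def tvDist {α : Type*} [MeasurableSpace α] (P Q : Measure α) : ℝ :=
  ⨆ E : {s : Set α // MeasurableSet s}, |(P E).toReal - (Q E).toReal|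

/-- The Frobenius norm of a real matrix. -/
noncomputable def frobNorm {m n : ℕ} (A : Matrix (Fin m) (Fin n) ℝ) : ℝ :=
  Real.sqrt (∑ i, ∑ j, (A i j) ^ 2)

open ProbabilityTheory

lemma hell_ineq (h : ℝ) (hh : 0 < h) (t : ℝ) (ht : 0 < t) :
    |h - 1| ≤ (1 / (2 * t)) * (h * Real.log h + 1 - h) + t * (h + 1) := by
  obtain ⟨u, hu, rfl⟩ : ∃ u : ℝ, 0 < u ∧ h = u ^ 2 :=
    ⟨√h, Real.sqrt_pos.2 hh, (Real.sq_sqrt hh.le).symm⟩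
  have h1 : (u - 1) ^ 2 ≤ u ^ 2 * Real.log (u ^ 2) + 1 - u ^ 2 := by
    have := Real.one_sub_inv_le_log_of_pos hu
    rw [Real.log_pow]
    have h2 : u ^ 2 * (1 - u⁻¹) ≤ u ^ 2 * Real.log u := by gcongr
    have h3 : u ^ 2 * (1 - u⁻¹) = u ^ 2 - u := by field_simp
    push_cast
    nlinarith
  have h4 : |u ^ 2 - 1| ≤ (1 / (2 * t)) * (u - 1) ^ 2 + t / 2 * (u + 1) ^ 2 := by
    have e : (1 / (2 * t)) * (u - 1) ^ 2 + t / 2 * (u + 1) ^ 2 =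
      ((u - 1) ^ 2 + t ^ 2 * (u + 1) ^ 2) / (2 * t) := by field_simp
    rw [e, le_div_iff₀ (by positivity)]
    have := abs_mul_abs_self (u ^ 2 - 1)
    rcases abs_cases (u ^ 2 - 1) with ⟨h, _⟩ | ⟨h, _⟩ <;> rw [h]
    · nlinarith [sq_nonneg ((u - 1) - t * (u + 1))]
    · nlinarith [sq_nonneg ((u - 1) + t * (u + 1))]
  have h5 : (1 / (2 * t)) * (u - 1) ^ 2 ≤ (1 / (2 * t)) * (u ^ 2 * Real.log (u ^ 2) + 1 - u ^ 2) := by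
    gcongr
  nlinarith [mul_nonneg ht.le (sq_nonneg (u - 1))]

lemma weak_pinsker {α : Type*} [MeasurableSpace α] (Q : Measure α) [IsProbabilityMeasure Q]
    (h : α → ℝ) (hm : Measurable h) (hpos : ∀ x, 0 < h x)
    (hP : IsProbabilityMeasure (Q.withDensity fun x => ENNReal.ofReal (h x)))
    (hint : Integrable (fun x => Real.log (h x)) (Q.withDensity fun x => ENNReal.ofReal (h x)))
    (c : ℝ) (hc : 0 ≤ c)
    (hk : ∫ x, Real.log (h x) ∂(Q.withDensity fun x => ENNReal.ofReal (h x)) ≤ c ^ 2) :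
    tvDist (Q.withDensity fun x => ENNReal.ofReal (h x)) Q ≤ c := by
  have i1 : Integrable (fun x => h x * Real.log (h x)) Q := by
    rw [integrable_withDensity_iff_integrable_smul' (by fun_prop) (by simp)] at hint
    refine hint.congr (ae_of_all _ fun x => ?_)
    simp [ENNReal.toReal_ofReal (hpos x).le]
  have e1 : ∫ x, Real.log (h x) ∂(Q.withDensity fun x => ENNReal.ofReal (h x)) =
      ∫ x, h x * Real.log (h x) ∂Q := by
    rw [integral_withDensity_eq_integral_toReal_smul (by fun_prop) (by simp)]
    refine integral_congr_ae (ae_of_all _ fun x => ?_)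
    simp [ENNReal.toReal_ofReal (hpos x).le]
  have l1 : ∫⁻ x, ENNReal.ofReal (h x) ∂Q = 1 := by
    have := hP.measure_univ
    rwa [withDensity_apply _ MeasurableSet.univ, Measure.restrict_univ] at this
  have i2 : Integrable h Q := by
    refine ⟨hm.aestronglyMeasurable, ?_⟩
    rw [hasFiniteIntegral_iff_ofReal (ae_of_all _ fun x => (hpos x).le), l1]
    simp
  have e2 : ∫ x, h x ∂Q = 1 := by
    rw [integral_eq_lintegral_of_nonneg_ae (ae_of_all _ fun x => (hpos x).le)
      hm.aestronglyMeasurable, l1]; simp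
  rw [e1] at hk
  set K := ∫ x, h x * Real.log (h x) ∂Q with hK
  have key : ∀ t : ℝ, 0 < t → ∫ x, |h x - 1| ∂Q ≤ (1 / (2 * t)) * K + 2 * t := by
    intro t ht
    calc ∫ x, |h x - 1| ∂Q ≤
        ∫ x, ((1 / (2 * t)) * (h x * Real.log (h x) + 1 - h x) + t * (h x + 1)) ∂Q := by
          refine integral_mono (i2.sub (integrable_const 1)).abs ?_ fun x => hell_ineq _ (hpos x) t ht
          exact (((i1.add (integrable_const 1)).sub i2).const_mul _).add
            ((i2.add (integrable_const 1)).const_mul _)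
      _ = _ := by
          have j1 : Integrable (fun x => h x * Real.log (h x) + 1) Q := i1.add (integrable_const 1)
          have j2 : Integrable (fun x => h x * Real.log (h x) + 1 - h x) Q := j1.sub i2
          have j3 : Integrable (fun x => h x + 1) Q := i2.add (integrable_const 1)
          rw [integral_add (j2.const_mul _) (j3.const_mul _), integral_const_mul,
            integral_const_mul, integral_sub j1 i2, integral_add i1 (integrable_const 1),
            integral_add i2 (integrable_const 1), e2]
          simp
          ring
  have i3 : Integrable (fun x => h x - 1) Q := i2.sub (integrable_const 1)
  have half : ∀ E, MeasurableSet E →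
      |((Q.withDensity fun x => ENNReal.ofReal (h x)) E).toReal - (Q E).toReal| ≤
        (1 / 2) * ∫ x, |h x - 1| ∂Q := by
    intro E hE
    have a1 : ((Q.withDensity fun x => ENNReal.ofReal (h x)) E).toReal = ∫ x in E, h x ∂Q := by
      rw [withDensity_apply _ hE, integral_eq_lintegral_of_nonneg_ae
        (ae_of_all _ fun x => (hpos x).le) hm.aestronglyMeasurable]
    have a2 : (Q E).toReal = ∫ x in E, (1 : ℝ) ∂Q := by simp [Measure.real]
    rw [a1, a2, ← integral_sub i2.integrableOn (integrable_const _)]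
    have s1 := integral_add_compl hE i3
    have s2 := integral_add_compl hE i3.abs
    have s3 : ∫ x, (h x - 1) ∂Q = 0 := by
      rw [integral_sub i2 (integrable_const 1), e2]; simp
    have n1 := abs_integral_le_integral_abs (f := fun x => h x - 1) (μ := Q.restrict E)
    have n2 := abs_integral_le_integral_abs (f := fun x => h x - 1) (μ := Q.restrict Eᶜ)
    have : ∫ x in Eᶜ, (h x - 1) ∂Q = - ∫ x in E, (h x - 1) ∂Q := by linarith
    rw [this, abs_neg] at n2
    linarith
  unfold tvDist
  have : Nonempty {s : Set α // MeasurableSet s} := ⟨⟨∅, MeasurableSet.empty⟩⟩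
  refine ciSup_le fun E => (half E E.2).trans ?_
  refine le_of_forall_pos_le_add fun δ hδ => ?_
  have k := key ((c + δ) / 2) (by linarith)
  have hK2 : K ≤ (c + δ) ^ 2 := by nlinarith
  have : (1 / (2 * ((c + δ) / 2))) * K ≤ c + δ := by
    rw [show 2 * ((c + δ) / 2) = c + δ by ring, one_div, inv_mul_le_iff₀ (by linarith)]
    nlinarith
  linarith

lemma pi_gaussian_eq (p : ℕ) : Measure.pi (fun _ : Fin p => gaussianReal 0 1) =
    volume.withDensity (fun x : Fin p → ℝ => ENNReal.ofReal (∏ i, gaussianPDFReal 0 1 (x i))) := by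
  refine Measure.pi_eq (μ := fun _ : Fin p => gaussianReal 0 1) fun s hs => ?_
  rw [withDensity_apply _ (MeasurableSet.univ_pi hs), volume_pi, Measure.restrict_pi_pi]
  rw [← ofReal_integral_eq_lintegral_ofReal, integral_fintype_prod_eq_prod (𝕜 := ℝ)
    (f := fun _ => gaussianPDFReal 0 1), ENNReal.ofReal_prod_of_nonneg]
  · refine Finset.prod_congr rfl fun i _ => ?_
    rw [gaussianReal_apply_eq_integral _ (by simp)]
  · exact fun i _ => integral_nonneg fun x => gaussianPDFReal_nonneg _ _ _
  · exact Integrable.fintype_prod (f := fun _ => gaussianPDFReal 0 1)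
      (μ := fun i => volume.restrict (s i)) fun i => (integrable_gaussianPDFReal _ _).integrableOn
  · exact ae_of_all _ fun x => Finset.prod_nonneg fun i _ => gaussianPDFReal_nonneg _ _ _

lemma prod_pdf (p : ℕ) (x : EuclideanSpace ℝ (Fin p)) :
    ∏ i, gaussianPDFReal 0 1 (x i) = gaussianDensity 1 x := by
  simp only [gaussianPDFReal, gaussianDensity, Finset.prod_mul_distrib, Finset.prod_const,
    ← Real.exp_sum]
  congr 1
  · simp only [NNReal.coe_one, mul_one, Finset.card_univ, Fintype.card_fin, det_one]
    rw [Real.sqrt_eq_rpow, ← Real.rpow_neg (by positivity), ← Real.rpow_natCast,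
      ← Real.rpow_natCast, ← Real.rpow_mul (by positivity), ← Real.rpow_mul (by positivity)]
    congr 1
    ring
  · congr 1
    simp only [inv_one, one_mulVec, dotProduct, Finset.mul_sum]
    refine Finset.sum_congr rfl fun i _ => ?_
    simp
    ring

lemma measurable_gd {p : ℕ} (S : Matrix (Fin p) (Fin p) ℝ) : Measurable (gaussianDensity S) := by
  unfold gaussianDensity
  simp only [dotProduct, mulVec]
  fun_prop

lemma gaussian_one (p : ℕ) :
    gaussianMeasure (1 : Matrix (Fin p) (Fin p) ℝ) = stdGaussian (EuclideanSpace ℝ (Fin p)) := by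
  rw [← map_pi_eq_stdGaussian, pi_gaussian_eq, gaussianMeasure]
  ext E hE
  rw [Measure.map_apply (by fun_prop) hE, withDensity_apply _ hE,
    withDensity_apply _ ((by fun_prop : Measurable (WithLp.toLp 2)) hE),
    ← (PiLp.volume_preserving_toLp (Fin p)).setLIntegral_comp_preimage hE
      (by have := measurable_gd (1 : Matrix (Fin p) (Fin p) ℝ); fun_prop)]
  refine lintegral_congr fun x => ?_
  rw [← prod_pdf]

lemma gaussian_map {p : ℕ} (L S : Matrix (Fin p) (Fin p) ℝ) (hS : S = L * Lᵀ) (hL : L.det ≠ 0) :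
    gaussianMeasure S = (gaussianMeasure 1).map (toEuclideanCLM (𝕜 := ℝ) L) := by
  set f := toEuclideanCLM (𝕜 := ℝ) L with hf
  have hdet : LinearMap.det (f : EuclideanSpace ℝ (Fin p) →ₗ[ℝ] EuclideanSpace ℝ (Fin p)) = L.det := by
    rw [hf, coe_toEuclideanCLM_eq_toEuclideanLin, LinearMap.det_toLpLin]
  have hfm : Measurable f := f.continuous.measurable
  have hmap := Measure.map_linearMap_addHaar_eq_smul_addHaar
    (volume : Measure (EuclideanSpace ℝ (Fin p))) (f := f.toLinearMap) (by rwa [hdet])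
  have hmap : Measure.map f volume = ENNReal.ofReal |L.det⁻¹| • volume := by
    rw [← hdet]; exact hmap
  have hd : ∀ x, gaussianDensity S (f x) = |L.det⁻¹| * gaussianDensity 1 x := by
    intro x
    unfold gaussianDensity
    rw [← mul_assoc]
    congr 1
    · rw [hS, det_mul, det_transpose, det_one, mul_one, ← sq, ← sq_abs,
        Real.mul_rpow (by positivity) (by positivity), mul_comm, ← Real.rpow_natCast |L.det|,
        ← Real.rpow_mul (by positivity), abs_inv]
      congr 1
      norm_num [Real.rpow_neg_one]
    · congr 2
      have : (fun i => f x i) = L *ᵥ (fun i => x i) := by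
        rw [hf]; ext i; simp [ofLp_toEuclideanCLM]
      rw [this, hS]
      have hu : IsUnit L.det := isUnit_iff_ne_zero.2 hL
      rw [Matrix.mul_inv_rev, mulVec_mulVec, Matrix.mul_assoc, nonsing_inv_mul _ hu, Matrix.mul_one,
        dotProduct_mulVec, vecMul_mulVec, ← transpose_nonsing_inv, ← Matrix.transpose_mul, nonsing_inv_mul _ hu]
      simp
  ext E hE
  rw [Measure.map_apply hfm hE, gaussianMeasure, gaussianMeasure, withDensity_apply _ hE,
    withDensity_apply _ (hfm hE)]
  have h1 : ENNReal.ofReal |L.det⁻¹| ≠ 0 := by simpa using hL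
  have := measurable_gd S
  have this1 := measurable_gd (1 : Matrix (Fin p) (Fin p) ℝ)
  have h2 : ENNReal.ofReal |L.det⁻¹| * ∫⁻ x in E, ENNReal.ofReal (gaussianDensity S x) =
      ENNReal.ofReal |L.det⁻¹| * ∫⁻ x in f ⁻¹' E, ENNReal.ofReal (gaussianDensity 1 x) := by
    rw [← smul_eq_mul, ← lintegral_smul_measure, ← Measure.restrict_smul, ← hmap,
      setLIntegral_map hE (by fun_prop) hfm, ← lintegral_const_mul _ (by fun_prop)]
    refine lintegral_congr fun x => ?_
    rw [hd, ENNReal.ofReal_mul (by positivity)]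
  exact (ENNReal.mul_right_inj h1 (by simp)).1 h2

lemma gaussian_eq_mv {p : ℕ} (S : Matrix (Fin p) (Fin p) ℝ) (hS : S.PosDef) :
    gaussianMeasure S = multivariateGaussian 0 S := by
  open scoped MatrixOrder in
  have h0 : (0 : Matrix (Fin p) (Fin p) ℝ) ≤ S := hS.posSemidef.nonneg
  have hsq : CFC.sqrt S * CFC.sqrt S = S := CFC.sqrt_mul_sqrt_self S h0
  have hsa : (CFC.sqrt S)ᵀ = CFC.sqrt S := by
    have : (CFC.sqrt S).PosSemidef := Matrix.nonneg_iff_posSemidef.1 (CFC.sqrt_nonneg S)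
    simpa [conjTranspose_eq_transpose_of_trivial] using this.isHermitian.eq
  have hdet : (CFC.sqrt S).det ≠ 0 := by
    intro h
    have := hS.det_pos
    rw [← hsq, det_mul, h] at this
    simp at this
  rw [gaussian_map (CFC.sqrt S) S (by rw [hsa, hsq]) hdet, gaussian_one, multivariateGaussian]
  simp

lemma second_moment {p : ℕ} (S A : Matrix (Fin p) (Fin p) ℝ) (hS : S.PosDef) :
    Integrable (fun x : EuclideanSpace ℝ (Fin p) => (fun i => x i) ⬝ᵥ A *ᵥ (fun i => x i))
      (gaussianMeasure S) ∧
    ∫ x : EuclideanSpace ℝ (Fin p), (fun i => x i) ⬝ᵥ A *ᵥ (fun i => x i) ∂(gaussianMeasure S)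
      = (A * S).trace := by
  rw [gaussian_eq_mv S hS]
  set P := multivariateGaussian 0 S with hP
  have hL : ∀ i, MemLp (fun x : EuclideanSpace ℝ (Fin p) => x i) 2 P := by
    intro i
    exact (IsGaussian.memLp_dual P (EuclideanSpace.proj i) 2 (by simp))
  have hi : ∀ i j, Integrable (fun x : EuclideanSpace ℝ (Fin p) => x i * x j) P :=
    fun i j => (hL i).integrable_mul (hL j)
  have hmean : ∀ i, ∫ x : EuclideanSpace ℝ (Fin p), x i ∂P = 0 := by
    intro i
    have := (EuclideanSpace.proj (𝕜 := ℝ) i : EuclideanSpace ℝ (Fin p) →L[ℝ] ℝ).integral_comp_comm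
      (IsGaussian.integrable_fun_id (μ := P))
    rw [hP, integral_id_multivariateGaussian] at this
    simpa using this
  have hcov : ∀ i j, ∫ x : EuclideanSpace ℝ (Fin p), x i * x j ∂P = S i j := by
    intro i j
    have := covariance_eval_multivariateGaussian (μ := 0) hS.posSemidef i j
    rw [covariance_eq_sub (hL i) (hL j)] at this
    have e : ∫ x : EuclideanSpace ℝ (Fin p), x i * x j ∂P - (∫ x : EuclideanSpace ℝ (Fin p), x i ∂P) *
      (∫ x : EuclideanSpace ℝ (Fin p), x j ∂P) = S i j := this
    rw [hmean, hmean] at e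
    simpa using e
  have e : ∀ x : EuclideanSpace ℝ (Fin p), (fun i => x i) ⬝ᵥ A *ᵥ (fun i => x i) =
      ∑ i, ∑ j, A i j * (x i * x j) := by
    intro x
    simp only [dotProduct, mulVec, Finset.mul_sum]
    exact Finset.sum_congr rfl fun i _ => Finset.sum_congr rfl fun j _ => by ring
  simp_rw [e]
  refine ⟨integrable_finsetSum _ fun i _ => integrable_finsetSum _ fun j _ => (hi i j).const_mul _, ?_⟩
  have e2 : ∫ x : EuclideanSpace ℝ (Fin p), ∑ i, ∑ j, A i j * (x i * x j) ∂P =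
      ∑ i, ∑ j, A i j * S i j := by
    rw [integral_finsetSum (f := fun i (x : EuclideanSpace ℝ (Fin p)) => ∑ j, A i j * (x i * x j)) _
      fun i _ => integrable_finsetSum _ fun j _ => (hi i j).const_mul _]
    refine Finset.sum_congr rfl fun i _ => ?_
    rw [integral_finsetSum (f := fun j (x : EuclideanSpace ℝ (Fin p)) => A i j * (x i * x j)) _
      fun j _ => (hi i j).const_mul _]
    refine Finset.sum_congr rfl fun j _ => ?_
    rw [integral_const_mul, hcov]
  rw [e2]
  simp only [trace, diag, mul_apply]
  refine Finset.sum_congr rfl fun i _ => Finset.sum_congr rfl fun j _ => ?_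
  have := hS.isHermitian.apply i j
  simp at this
  rw [this]

lemma gaussian_withDensity {p : ℕ} (S T : Matrix (Fin p) (Fin p) ℝ) (hd : S.det = T.det) :
    gaussianMeasure S = (gaussianMeasure T).withDensity fun x => ENNReal.ofReal
      (Real.exp ((1 / 2) * ((fun i => x i) ⬝ᵥ (T⁻¹ - S⁻¹) *ᵥ fun i => x i))) := by
  have m1 := measurable_gd T
  unfold gaussianMeasure
  rw [← withDensity_mul _ (by fun_prop) (by simp only [dotProduct, mulVec]; fun_prop)]
  congr 1
  ext x
  rw [Pi.mul_apply, ← ENNReal.ofReal_mul' (Real.exp_pos _).le]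
  congr 1
  unfold gaussianDensity
  rw [hd, mul_assoc, ← Real.exp_add, sub_mulVec, dotProduct_sub]
  congr 2
  ring

lemma klDiv_gaussian {p : ℕ} (S T : Matrix (Fin p) (Fin p) ℝ) (hS : S.PosDef) (hT : T.PosDef)
    (hd : S.det = T.det) :
    klDiv (gaussianMeasure S) (gaussianMeasure T) = (1 / 2) * ((T⁻¹ - S⁻¹) * S).trace ∧
    ∀ c : ℝ, 0 ≤ c → (1 / 2) * ((T⁻¹ - S⁻¹) * S).trace ≤ c ^ 2 →
      tvDist (gaussianMeasure S) (gaussianMeasure T) ≤ c := by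
  have pS : IsProbabilityMeasure (gaussianMeasure S) := by
    rw [gaussian_eq_mv S hS]; infer_instance
  have pT : IsProbabilityMeasure (gaussianMeasure T) := by
    rw [gaussian_eq_mv T hT]; infer_instance
  have hW := gaussian_withDensity S T hd
  obtain ⟨hi, hm⟩ := second_moment S (T⁻¹ - S⁻¹) hS
  set q : EuclideanSpace ℝ (Fin p) → ℝ :=
    fun x => (fun i => x i) ⬝ᵥ (T⁻¹ - S⁻¹) *ᵥ fun i => x i with hq
  have mq : Measurable q := by
    simp only [hq, dotProduct, mulVec]; fun_prop
  have hlog : ∫ x, Real.log (Real.exp ((1 / 2) * q x)) ∂(gaussianMeasure S) =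
      (1 / 2) * ((T⁻¹ - S⁻¹) * S).trace := by
    simp only [Real.log_exp]
    rw [integral_const_mul, hm]
  have hli : Integrable (fun x => Real.log (Real.exp ((1 / 2) * q x))) (gaussianMeasure S) := by
    simp only [Real.log_exp]
    exact hi.const_mul _
  constructor
  · rw [← hlog]
    unfold klDiv
    have hr : (gaussianMeasure S).rnDeriv (gaussianMeasure T) =ᵐ[gaussianMeasure T]
        fun x => ENNReal.ofReal (Real.exp ((1 / 2) * q x)) := by
      conv_lhs => rw [hW]
      exact Measure.rnDeriv_withDensity _ (by fun_prop)
    have hac : gaussianMeasure S ≪ gaussianMeasure T := by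
      rw [hW]; exact withDensity_absolutelyContinuous _ _
    refine integral_congr_ae ?_
    filter_upwards [hac.ae_le hr] with x hx
    rw [hx, ENNReal.toReal_ofReal (Real.exp_pos _).le]
  · intro c hc hk
    rw [← hlog] at hk
    rw [hW] at hk hli pS ⊢
    exact weak_pinsker _ (fun x => Real.exp ((1 / 2) * q x)) (by fun_prop)
      (fun x => Real.exp_pos _) pS hli c hc hk

lemma spiked_posDef {p r : ℕ} (lam s2 : ℝ) (hlam : 0 < lam) (hs2 : 0 < s2)
    (U : Matrix (Fin p) (Fin r) ℝ) :
    (lam • (U * Uᵀ) + s2 • (1 : Matrix (Fin p) (Fin p) ℝ)).PosDef := by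
  refine PosDef.posSemidef_add ?_ (PosDef.one.smul hs2)
  have := posSemidef_self_mul_conjTranspose U
  rw [conjTranspose_eq_transpose_of_trivial] at this
  exact this.smul hlam.le

lemma spiked_det {p r : ℕ} (lam s2 : ℝ) (hs2 : 0 < s2)
    (U : Matrix (Fin p) (Fin r) ℝ) (h : Uᵀ * U = 1) :
    (lam • (U * Uᵀ) + s2 • (1 : Matrix (Fin p) (Fin p) ℝ)).det =
      s2 ^ p * (1 + lam / s2) ^ r := by
  have : lam • (U * Uᵀ) + s2 • (1 : Matrix (Fin p) (Fin p) ℝ) =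
      s2 • (1 + ((lam / s2) • U) * Uᵀ) := by
    rw [smul_add, smul_mul, smul_smul, mul_div_cancel₀ _ hs2.ne', add_comm]
  rw [this, det_smul, det_one_add_mul_comm, Matrix.mul_smul, h]
  have : (1 : Matrix (Fin r) (Fin r) ℝ) + (lam / s2) • 1 = (1 + lam / s2) • 1 := by
    rw [add_smul, one_smul]
  rw [this, det_smul]
  simp

lemma spiked_inv {p r : ℕ} (lam s2 : ℝ) (hlam : 0 < lam) (hs2 : 0 < s2)
    (U : Matrix (Fin p) (Fin r) ℝ) (h : Uᵀ * U = 1) :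
    (lam • (U * Uᵀ) + s2 • (1 : Matrix (Fin p) (Fin p) ℝ))⁻¹ =
      s2⁻¹ • (1 : Matrix (Fin p) (Fin p) ℝ) - (lam / (s2 * (s2 + lam))) • (U * Uᵀ) := by
  apply inv_eq_right_inv
  have hP : U * Uᵀ * (U * Uᵀ) = U * Uᵀ := by
    rw [Matrix.mul_assoc, ← Matrix.mul_assoc Uᵀ, h, Matrix.one_mul]
  simp only [Matrix.add_mul, Matrix.mul_sub, smul_mul, Matrix.mul_smul, hP, Matrix.mul_one,
    Matrix.one_mul, smul_smul]
  have hne : s2 + lam ≠ 0 := by positivity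
  ext i j
  simp only [Matrix.add_apply, Matrix.sub_apply, Matrix.smul_apply, smul_eq_mul]
  field_simp
  ring

lemma frob_sq {p r : ℕ} (U V : Matrix (Fin p) (Fin r) ℝ) (h₁ : Uᵀ * U = 1) (h₂ : Vᵀ * V = 1) :
    frobNorm (U * Uᵀ - V * Vᵀ) ^ 2 = 2 * r - 2 * (V * Vᵀ * (U * Uᵀ)).trace := by
  have hP : U * Uᵀ * (U * Uᵀ) = U * Uᵀ := by
    rw [Matrix.mul_assoc, ← Matrix.mul_assoc Uᵀ, h₁, Matrix.one_mul]
  have hQ : V * Vᵀ * (V * Vᵀ) = V * Vᵀ := by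
    rw [Matrix.mul_assoc, ← Matrix.mul_assoc Vᵀ, h₂, Matrix.one_mul]
  have tP : (U * Uᵀ).trace = r := by rw [trace_mul_comm, h₁]; simp
  have tQ : (V * Vᵀ).trace = r := by rw [trace_mul_comm, h₂]; simp
  unfold frobNorm
  rw [Real.sq_sqrt (by positivity)]
  set D := U * Uᵀ - V * Vᵀ with hD
  have hDt : Dᵀ = D := by simp [hD, transpose_sub, transpose_mul]
  have : ∑ i, ∑ j, D i j ^ 2 = (D * Dᵀ).trace := by
    simp [trace, mul_apply, sq]
  rw [this, hDt, hD, Matrix.sub_mul, Matrix.mul_sub, Matrix.mul_sub, hP, hQ, trace_sub, trace_sub,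
    trace_sub, tP, tQ, trace_mul_comm (U * Uᵀ) (V * Vᵀ)]
  ring

/-- For spiked covariances `Σᵢ = λUᵢUᵢᵀ + σ²I` with `‖U₁U₁ᵀ − U₂U₂ᵀ‖_F ≤ ε₀`:
`KL(N(0,Σ₁)‖N(0,Σ₂)) ≤ (1/2)·(λ²/(σ²(σ²+λ)))·ε₀²` and, by Pinsker's inequality,
`TV(N(0,Σ₁), N(0,Σ₂)) ≤ (ε₀/2)·√(λ²/(σ²(σ²+λ)))`. -/
theorem klDiv_tv_spiked_gaussians_le (p r : ℕ) (lam s2 ε₀ : ℝ)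
    (hlam : 0 < lam) (hs2 : 0 < s2) (hε₀ : 0 ≤ ε₀)
    (U₁ U₂ : Matrix (Fin p) (Fin r) ℝ) (h₁ : U₁ᵀ * U₁ = 1) (h₂ : U₂ᵀ * U₂ = 1)
    (hF : frobNorm (U₁ * U₁ᵀ - U₂ * U₂ᵀ) ≤ ε₀) :
    klDiv (gaussianMeasure (lam • (U₁ * U₁ᵀ) + s2 • (1 : Matrix (Fin p) (Fin p) ℝ)))
        (gaussianMeasure (lam • (U₂ * U₂ᵀ) + s2 • (1 : Matrix (Fin p) (Fin p) ℝ)))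
      ≤ (1 / 2) * (lam ^ 2 / (s2 * (s2 + lam))) * ε₀ ^ 2 ∧
    tvDist (gaussianMeasure (lam • (U₁ * U₁ᵀ) + s2 • (1 : Matrix (Fin p) (Fin p) ℝ)))
        (gaussianMeasure (lam • (U₂ * U₂ᵀ) + s2 • (1 : Matrix (Fin p) (Fin p) ℝ)))
      ≤ (ε₀ / 2) * Real.sqrt (lam ^ 2 / (s2 * (s2 + lam))) := by

  have p1 := spiked_posDef lam s2 hlam hs2 U₁
  have p2 := spiked_posDef lam s2 hlam hs2 U₂
  obtain ⟨hk, ht⟩ := klDiv_gaussian _ _ p1 p2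
    ((spiked_det lam s2 hs2 U₁ h₁).trans (spiked_det lam s2 hs2 U₂ h₂).symm)
  have htr : (((lam • (U₂ * U₂ᵀ) + s2 • (1 : Matrix (Fin p) (Fin p) ℝ))⁻¹ -
      (lam • (U₁ * U₁ᵀ) + s2 • (1 : Matrix (Fin p) (Fin p) ℝ))⁻¹) *
      (lam • (U₁ * U₁ᵀ) + s2 • (1 : Matrix (Fin p) (Fin p) ℝ))).trace =
      (1 / 2) * (lam ^ 2 / (s2 * (s2 + lam))) * frobNorm (U₁ * U₁ᵀ - U₂ * U₂ᵀ) ^ 2 := by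
    have hu : IsUnit (lam • (U₁ * U₁ᵀ) + s2 • (1 : Matrix (Fin p) (Fin p) ℝ)).det :=
      isUnit_iff_ne_zero.2 p1.det_pos.ne'
    have t1 : (U₁ * U₁ᵀ).trace = r := by rw [trace_mul_comm, h₁]; simp
    have t2 : (U₂ * U₂ᵀ).trace = r := by rw [trace_mul_comm, h₂]; simp
    rw [Matrix.sub_mul, nonsing_inv_mul _ hu, spiked_inv lam s2 hlam hs2 U₂ h₂, frob_sq U₁ U₂ h₁ h₂]
    simp only [Matrix.mul_add, Matrix.sub_mul, smul_mul, Matrix.mul_smul, Matrix.mul_one,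
      Matrix.one_mul, smul_smul, trace_add, trace_sub, trace_smul, t1, t2, trace_one, smul_eq_mul]
    have hne : s2 + lam ≠ 0 := by positivity
    field_simp
    ring
  rw [htr] at hk ht
  have hK : 0 ≤ lam ^ 2 / (s2 * (s2 + lam)) := by positivity
  have hF0 : 0 ≤ frobNorm (U₁ * U₁ᵀ - U₂ * U₂ᵀ) := Real.sqrt_nonneg _
  have hsq : frobNorm (U₁ * U₁ᵀ - U₂ * U₂ᵀ) ^ 2 ≤ ε₀ ^ 2 := by gcongr
  have hm := mul_le_mul_of_nonneg_left hsq hK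
  have hm0 := mul_nonneg hK (sq_nonneg ε₀)
  constructor
  · rw [hk]
    linarith
  · apply ht _ (by positivity)
    rw [mul_pow, Real.sq_sqrt hK]
    linarith
end

section
/- (DP Fano lower bound, privacy term) Let Q = {P₁,...,P_N} be product measures P_i = μ_i^{(1)}×⋯×μ_i^{(n)} with parameters θ(P_i) in a pseudo-metric space (Θ,ρ) satisfying ρ(θ(P_i), θ(P_j)) ≥ ρ₀ and Σ_{k∈[n]} TV(μ_i^{(k)}, μ_j^{(k)}) ≤ t₀ for all i ≠ j. Then every (ε,δ)-differentially private algorithm A satisfies sup_{i∈[N]} E[ρ(A, θ(P_i))] ≥ (ρ₀/4)·min{1, (N−1)/exp(4εt₀)}·(1 − 2δe^{4εt₀}/(e^ε − 1)). -/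
open MeasureTheory

/-- `(ε,δ)`-differential privacy for a randomized algorithm on datasets of `n`
observations: for any two datasets differing in one coordinate,
`P(A(X) ∈ E) ≤ e^ε P(A(X') ∈ E) + δ` for every measurable `E`. -/
def IsDP {Ω Θ : Type*} [MeasurableSpace Ω] [MeasurableSpace Θ] (n : ℕ)
    (A : (Fin n → Ω) → Measure Θ) (ε δ : ℝ) : Prop :=
  ∀ x x' : Fin n → Ω, (∃ i, ∀ j, j ≠ i → x j = x' j) →
    ∀ E : Set Θ, MeasurableSet E →
      A x E ≤ ENNReal.ofReal (Real.exp ε) * A x' E + ENNReal.ofReal δ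


/-- Maximal coupling of two probability measures, realised on `Ω ⊕ (Ω × Ω)`. -/
lemma exists_coupling_aux {Ω : Type*} [MeasurableSpace Ω] (μ ν : Measure Ω)
    [IsProbabilityMeasure μ] [IsProbabilityMeasure ν] :
    ∃ π : Measure (Ω ⊕ (Ω × Ω)), IsProbabilityMeasure π ∧
      π.map (Sum.elim id Prod.fst) = μ ∧ π.map (Sum.elim id Prod.snd) = ν ∧
      π.real (Set.range Sum.inr) ≤ tvDist μ ν := by
  obtain ⟨s, hs, h1, h2⟩ := hahn_decomposition μ ν
  have hle1 : ν.restrict s ≤ μ.restrict s := by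
    refine Measure.le_iff.2 fun t ht => ?_
    rw [Measure.restrict_apply ht, Measure.restrict_apply ht]
    exact h1 _ (ht.inter hs) Set.inter_subset_right
  have hle2 : μ.restrict sᶜ ≤ ν.restrict sᶜ := by
    refine Measure.le_iff.2 fun t ht => ?_
    rw [Measure.restrict_apply ht, Measure.restrict_apply ht]
    exact h2 _ (ht.inter hs.compl) Set.inter_subset_right
  obtain ⟨a, hadef⟩ : ∃ a, a = μ.restrict s - ν.restrict s := ⟨_, rfl⟩
  obtain ⟨b, hbdef⟩ : ∃ b, b = ν.restrict sᶜ - μ.restrict sᶜ := ⟨_, rfl⟩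
  have ha : a + ν.restrict s = μ.restrict s := by
    rw [hadef]; exact Measure.sub_add_cancel_of_le hle1
  have hb : b + μ.restrict sᶜ = ν.restrict sᶜ := by
    rw [hbdef]; exact Measure.sub_add_cancel_of_le hle2
  obtain ⟨m, hm⟩ : ∃ m, m = ν.restrict s + μ.restrict sᶜ := ⟨_, rfl⟩
  have hma : m + a = μ := by
    rw [hm, add_right_comm, add_comm _ a, ha, Measure.restrict_add_restrict_compl hs]
  have hmb : m + b = ν := by
    rw [hm, add_assoc, add_comm _ b, hb, Measure.restrict_add_restrict_compl hs]
  have hfa : IsFiniteMeasure a := by rw [hadef]; infer_instance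
  have hfb : IsFiniteMeasure b := by rw [hbdef]; infer_instance
  have hfm : IsFiniteMeasure m := by rw [hm]; infer_instance
  have hua : m Set.univ + a Set.univ = 1 := by
    rw [← Measure.add_apply, hma]; exact measure_univ
  have hub : m Set.univ + b Set.univ = 1 := by
    rw [← Measure.add_apply, hmb]; exact measure_univ
  have hab : a Set.univ = b Set.univ :=
    (ENNReal.add_right_inj (measure_ne_top m Set.univ)).1 (hua.trans hub.symm)
  obtain ⟨q, hq⟩ : ∃ q : Measure (Ω × Ω), q = (a Set.univ)⁻¹ • a.prod b := ⟨_, rfl⟩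
  have hqa : q.map Prod.fst = a := by
    rw [hq, Measure.map_smul, Measure.map_fst_prod, smul_smul, ← hab]
    by_cases h0 : a Set.univ = 0
    · rw [Measure.measure_univ_eq_zero] at h0
      simp [h0]
    · rw [ENNReal.inv_mul_cancel h0 (measure_ne_top _ _), one_smul]
  have hqb : q.map Prod.snd = b := by
    rw [hq, Measure.map_smul, Measure.map_snd_prod, smul_smul]
    by_cases h0 : a Set.univ = 0
    · have hb0 : b = 0 := by rw [← Measure.measure_univ_eq_zero, ← hab, h0]
      simp [hb0]
    · rw [ENNReal.inv_mul_cancel h0 (measure_ne_top _ _), one_smul]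
  have hX : Measurable (Sum.elim id Prod.fst : Ω ⊕ (Ω × Ω) → Ω) :=
    measurable_id.sumElim measurable_fst
  have hY : Measurable (Sum.elim id Prod.snd : Ω ⊕ (Ω × Ω) → Ω) :=
    measurable_id.sumElim measurable_snd
  have hmX : (m.map Sum.inl + q.map Sum.inr).map (Sum.elim id Prod.fst) = μ := by
    rw [Measure.map_add _ _ hX, Measure.map_map hX measurable_inl,
      Measure.map_map hX measurable_inr, Sum.elim_comp_inl, Sum.elim_comp_inr, Measure.map_id,
      hqa, hma]
  have hmY : (m.map Sum.inl + q.map Sum.inr).map (Sum.elim id Prod.snd) = ν := by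
    rw [Measure.map_add _ _ hY, Measure.map_map hY measurable_inl,
      Measure.map_map hY measurable_inr, Sum.elim_comp_inl, Sum.elim_comp_inr, Measure.map_id,
      hqb, hmb]
  refine ⟨m.map Sum.inl + q.map Sum.inr, ⟨?_⟩, hmX, hmY, ?_⟩
  · have : (m.map Sum.inl + q.map Sum.inr).map (Sum.elim id Prod.fst) Set.univ = 1 := by
      rw [hmX]; exact measure_univ
    rwa [Measure.map_apply hX MeasurableSet.univ, Set.preimage_univ] at this
  · have hqu : q Set.univ = a Set.univ := by
      rw [← hqa, Measure.map_apply measurable_fst MeasurableSet.univ, Set.preimage_univ]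
    have h3 : (m.map Sum.inl + q.map Sum.inr : Measure (Ω ⊕ (Ω × Ω))) (Set.range (Sum.inr : Ω × Ω → Ω ⊕ (Ω × Ω)))
        = a Set.univ := by
      rw [Measure.add_apply, Measure.map_apply measurable_inl measurableSet_range_inr,
        Measure.map_apply measurable_inr measurableSet_range_inr]
      simp [hqu]
    have h4 : (a Set.univ).toReal = (μ s).toReal - (ν s).toReal := by
      have h5 : a Set.univ + ν s = μ s := by
        have := congrArg (fun κ : Measure Ω => κ Set.univ) ha
        simpa using this
      rw [← h5, ENNReal.toReal_add (measure_ne_top _ _) (measure_ne_top _ _)]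
      ring
    rw [Measure.real, h3, h4]
    refine (le_abs_self _).trans ?_
    refine le_ciSup (f := fun E : {s : Set Ω // MeasurableSet s} =>
      |(μ E).toReal - (ν E).toReal|) ?_ ⟨s, hs⟩
    refine ⟨1, ?_⟩
    rintro _ ⟨E, rfl⟩
    have e1 : (μ E).toReal ≤ 1 := measureReal_le_one
    have e2 : (ν E).toReal ≤ 1 := measureReal_le_one
    have e3 : 0 ≤ (μ E).toReal := ENNReal.toReal_nonneg
    have e4 : 0 ≤ (ν E).toReal := ENNReal.toReal_nonneg
    exact abs_le.2 ⟨by linarith, by linarith⟩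

/-- Group privacy in multiplicative form. -/
lemma group_privacy_aux {Ω : Type*} {n : ℕ} (g : (Fin n → Ω) → ℝ) (r : ℝ) (hr : 0 ≤ r)
    (hg : ∀ x x' : Fin n → Ω, (∃ i, ∀ j, j ≠ i → x j = x' j) → r * g x ≤ g x')
    (S : Finset (Fin n)) : ∀ x x' : Fin n → Ω, (∀ j, j ∉ S → x j = x' j) →
      r ^ S.card * g x ≤ g x' := by
  classical
  induction S using Finset.induction_on with
  | empty =>
    intro x x' h
    have : x = x' := funext fun j => h j (by simp)
    simp [this]
  | insert i S hi ih =>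
    intro x x' h
    have h1 := ih (Function.update x i (x' i)) x' (fun j hj => by
      by_cases hji : j = i
      · subst hji; simp
      · rw [Function.update_of_ne hji]
        exact h j (by simp [hji, hj]))
    have h2 := hg x (Function.update x i (x' i)) ⟨i, fun j hj => by
      rw [Function.update_of_ne hj]⟩
    rw [Finset.card_insert_of_notMem hi, pow_succ, mul_assoc]
    exact (mul_le_mul_of_nonneg_left h2 (pow_nonneg hr _)).trans h1

/-- The key coupling inequality. -/
lemma dp_coupling_aux {Ω : Type*} [MeasurableSpace Ω] {n : ℕ} (μ ν : Fin n → Measure Ω)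
    [∀ k, IsProbabilityMeasure (μ k)] [∀ k, IsProbabilityMeasure (ν k)]
    (t₀ ε δ : ℝ) (hε : 0 < ε) (hδ0 : 0 ≤ δ)
    (htv : ∑ k, tvDist (μ k) (ν k) ≤ t₀)
    (f : (Fin n → Ω) → ℝ) (hf : Measurable f) (hf0 : ∀ x, 0 ≤ f x) (hf1 : ∀ x, f x ≤ 1)
    (hdp : ∀ x x' : Fin n → Ω, (∃ i, ∀ j, j ≠ i → x j = x' j) →
      f x ≤ Real.exp ε * f x' + δ) :
    Real.exp (-(2 * ε * t₀)) * ((1 + 2 * ε * t₀) * ∫ x, f x ∂Measure.pi μ - ε * t₀) ≤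
      (∫ x, f x ∂Measure.pi ν) + δ / (Real.exp ε - 1) := by
  classical
  choose π hπ hX hY hD using fun k => exists_coupling_aux (μ k) (ν k)
  have hmX : Measurable (Sum.elim id Prod.fst : Ω ⊕ (Ω × Ω) → Ω) :=
    measurable_id.sumElim measurable_fst
  have hmY : Measurable (Sum.elim id Prod.snd : Ω ⊕ (Ω × Ω) → Ω) :=
    measurable_id.sumElim measurable_snd
  obtain ⟨X, hXdef⟩ : ∃ X : (Fin n → Ω ⊕ (Ω × Ω)) → (Fin n → Ω),
    X = fun z k => Sum.elim id Prod.fst (z k) := ⟨_, rfl⟩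
  obtain ⟨Y, hYdef⟩ : ∃ Y : (Fin n → Ω ⊕ (Ω × Ω)) → (Fin n → Ω),
    Y = fun z k => Sum.elim id Prod.snd (z k) := ⟨_, rfl⟩
  have mpX : MeasurePreserving X (Measure.pi π) (Measure.pi μ) := by
    rw [hXdef]
    exact measurePreserving_pi π μ (fun k => ⟨hmX, hX k⟩)
  have mpY : MeasurePreserving Y (Measure.pi π) (Measure.pi ν) := by
    rw [hYdef]
    exact measurePreserving_pi π ν (fun k => ⟨hmY, hY k⟩)
  have iX : ∫ x, f x ∂Measure.pi μ = ∫ z, f (X z) ∂Measure.pi π := by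
    rw [← mpX.map_eq, integral_map mpX.measurable.aemeasurable hf.aestronglyMeasurable]
  have iY : ∫ x, f x ∂Measure.pi ν = ∫ z, f (Y z) ∂Measure.pi π := by
    rw [← mpY.map_eq, integral_map mpY.measurable.aemeasurable hf.aestronglyMeasurable]
  have intf : ∀ W : (Fin n → Ω ⊕ (Ω × Ω)) → (Fin n → Ω), Measurable W →
      Integrable (fun z => f (W z)) (Measure.pi π) := fun W hW =>
    Integrable.of_bound (hf.comp hW).aestronglyMeasurable 1
      (Filter.Eventually.of_forall fun z => by
        rw [Real.norm_eq_abs, abs_of_nonneg (hf0 _)]; exact hf1 _)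
  obtain ⟨R, hR⟩ : ∃ R : Set (Ω ⊕ (Ω × Ω)), R = Set.range Sum.inr := ⟨_, rfl⟩
  have hRm : MeasurableSet R := by rw [hR]; exact measurableSet_range_inr
  have mR : ∀ k, MeasurableSet ((fun z : Fin n → Ω ⊕ (Ω × Ω) => z k) ⁻¹' R) := fun k =>
    (measurable_pi_apply k) hRm
  obtain ⟨D, hDdef⟩ : ∃ D : (Fin n → Ω ⊕ (Ω × Ω)) → ℝ, D = fun z =>
    ∑ k, ((fun z : Fin n → Ω ⊕ (Ω × Ω) => z k) ⁻¹' R).indicator (fun _ => (1 : ℝ)) z := ⟨_, rfl⟩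
  have intk : ∀ k, Integrable (((fun z : Fin n → Ω ⊕ (Ω × Ω) => z k) ⁻¹' R).indicator
      (fun _ => (1 : ℝ))) (Measure.pi π) := fun k =>
    (integrable_const _).indicator (mR k)
  have intD : Integrable D (Measure.pi π) := by
    rw [hDdef]
    exact integrable_finsetSum _ fun k _ => intk k
  have iD : ∫ z, D z ∂Measure.pi π ≤ t₀ := by
    rw [hDdef, integral_finsetSum _ fun k _ => intk k]
    refine le_trans (Finset.sum_le_sum fun k _ => ?_) htv
    rw [integral_indicator_const _ (mR k), smul_eq_mul, mul_one]
    have := (measurePreserving_eval π k).measureReal_preimage hRm.nullMeasurableSet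
    rw [hR] at this ⊢
    exact this.le.trans (hD k)
  have hDcard : ∀ z, D z = ((Finset.univ.filter fun k => z k ∈ R).card : ℝ) := by
    intro z
    rw [hDdef]
    simp only [Set.indicator_apply, Set.mem_preimage, Finset.sum_boole]
  obtain ⟨c, hc⟩ : ∃ c, c = δ / (Real.exp ε - 1) := ⟨_, rfl⟩
  have he1 : 0 < Real.exp ε - 1 := by linarith [Real.add_one_lt_exp hε.ne']
  have hc0 : 0 ≤ c := by rw [hc]; exact div_nonneg hδ0 he1.le
  have hcδ : c * (Real.exp ε - 1) = δ := by rw [hc]; field_simp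
  have hgp := group_privacy_aux (fun x => f x + c) (Real.exp (-ε)) (Real.exp_pos _).le
    (fun x x' hxx => by
      have h1 := hdp x x' hxx
      have h2 : Real.exp (-ε) * Real.exp ε = 1 := by rw [← Real.exp_add]; simp
      have h3 : f x + c ≤ Real.exp ε * (f x' + c) := by nlinarith
      calc Real.exp (-ε) * (f x + c) ≤ Real.exp (-ε) * (Real.exp ε * (f x' + c)) :=
            mul_le_mul_of_nonneg_left h3 (Real.exp_pos _).le
        _ = f x' + c := by rw [← mul_assoc, h2, one_mul])
  have hpt : ∀ z, Real.exp (-(2 * ε * t₀)) * ((1 + 2 * ε * t₀) * f (X z) - ε * D z) ≤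
      f (Y z) + c := by
    intro z
    have h1 := hgp (Finset.univ.filter fun k => z k ∈ R) (X z) (Y z) (fun k hk => by
      rw [hXdef, hYdef]
      simp only [Finset.mem_filter, Finset.mem_univ, true_and, hR] at hk
      show Sum.elim id Prod.fst (z k) = Sum.elim id Prod.snd (z k)
      rcases hz : z k with w | w
      · rfl
      · exact absurd ⟨w, hz.symm⟩ hk)
    have h2 : Real.exp (-ε) ^ (Finset.univ.filter fun k => z k ∈ R).card
        = Real.exp (-(2 * ε * t₀)) * Real.exp (2 * ε * t₀ - ε * D z) := by
      rw [← Real.exp_nat_mul, ← Real.exp_add, hDcard]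
      congr 1; ring
    rw [h2] at h1
    rw [mul_assoc (Real.exp (-(2 * ε * t₀)))] at h1
    refine le_trans ?_ h1
    refine mul_le_mul_of_nonneg_left ?_ (Real.exp_pos _).le
    have h3 := Real.add_one_le_exp (2 * ε * t₀ - ε * D z)
    have hD0 : 0 ≤ ε * D z := by rw [hDcard]; positivity
    have h4 := mul_le_mul_of_nonneg_right h3 (hf0 (X z))
    have h5 : ε * D z * f (X z) ≤ ε * D z := mul_le_of_le_one_right hD0 (hf1 _)
    have h6 : 0 ≤ Real.exp (2 * ε * t₀ - ε * D z) * c :=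
      mul_nonneg (Real.exp_pos _).le hc0
    nlinarith
  have hL : Integrable (fun z => (1 + 2 * ε * t₀) * f (X z) - ε * D z) (Measure.pi π) :=
    ((intf X mpX.measurable).const_mul _).sub (intD.const_mul _)
  have hint := integral_mono (hL.const_mul (Real.exp (-(2 * ε * t₀))))
    ((intf Y mpY.measurable).add (integrable_const c)) hpt
  have e1 : ∫ z, (f (Y z) + c) ∂Measure.pi π = (∫ z, f (Y z) ∂Measure.pi π) + c := by
    rw [integral_add (intf Y mpY.measurable) (integrable_const c)]
    simp
  have e2 : ∫ z, ((1 + 2 * ε * t₀) * f (X z) - ε * D z) ∂Measure.pi π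
      = (1 + 2 * ε * t₀) * (∫ z, f (X z) ∂Measure.pi π) - ε * ∫ z, D z ∂Measure.pi π := by
    rw [integral_sub ((intf X mpX.measurable).const_mul _) (intD.const_mul _),
      integral_const_mul, integral_const_mul]
  have hint2 : Real.exp (-(2 * ε * t₀)) * ((1 + 2 * ε * t₀) * (∫ z, f (X z) ∂Measure.pi π)
      - ε * ∫ z, D z ∂Measure.pi π) ≤ (∫ z, f (Y z) ∂Measure.pi π) + c := by
    rw [← e2, ← e1, ← integral_const_mul]
    exact hint
  rw [iX, iY, ← hc]
  refine le_trans (mul_le_mul_of_nonneg_left ?_ (Real.exp_pos _).le) hint2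
  have := mul_le_mul_of_nonneg_left iD hε.le
  linarith

/-- DP Fano lower bound (privacy term): for product measures `P_i = μ_i^{(1)}×⋯×μ_i^{(n)}`
with parameters `θ(P_i)` satisfying `ρ(θ(P_i), θ(P_j)) ≥ ρ₀` and
`Σ_k TV(μ_i^{(k)}, μ_j^{(k)}) ≤ t₀` for `i ≠ j`, every `(ε,δ)`-DP algorithm `A` has
maximal risk `sup_i E[ρ(A, θ(P_i))] ≥ (ρ₀/4)·min{1, (N−1)/e^{4εt₀}}·(1 − 2δe^{4εt₀}/(e^ε−1))`. -/
theorem dp_fano_privacy_lower_bound {Ω Θ : Type*} [MeasurableSpace Ω]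
    [MeasurableSpace Θ] [PseudoMetricSpace Θ] [OpensMeasurableSpace Θ]
    (N n : ℕ) (hN : 0 < N) (θ : Fin N → Θ) (μ : Fin N → Fin n → Measure Ω)
    [∀ i k, IsProbabilityMeasure (μ i k)]
    (ρ₀ t₀ ε δ : ℝ) (hρ₀ : 0 < ρ₀) (ht₀ : 0 < t₀) (hε : 0 < ε) (hδ0 : 0 ≤ δ) (hδ1 : δ < 1)
    (hsep : ∀ i j : Fin N, i ≠ j → ρ₀ ≤ dist (θ i) (θ j))
    (htv : ∀ i j : Fin N, i ≠ j → ∑ k, tvDist (μ i k) (μ j k) ≤ t₀)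
    (A : (Fin n → Ω) → Measure Θ) (hA : ∀ x, IsProbabilityMeasure (A x))
    (hmeas : ∀ E : Set Θ, MeasurableSet E → Measurable fun x => A x E)
    (hdp : IsDP n A ε δ) :
    ENNReal.ofReal (ρ₀ / 4 * min 1 (((N : ℝ) - 1) / Real.exp (4 * ε * t₀)) *
        (1 - 2 * δ * Real.exp (4 * ε * t₀) / (Real.exp ε - 1))) ≤
      ⨆ i : Fin N,
        ∫⁻ x, (∫⁻ a, ENNReal.ofReal (dist a (θ i)) ∂A x) ∂Measure.pi (μ i) := by
  classical
  obtain ⟨E, hE⟩ : ∃ E : Fin N → Set Θ, E = fun i => Metric.ball (θ i) (ρ₀ / 2) := ⟨_, rfl⟩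
  have hEm : ∀ i, MeasurableSet (E i) := fun i => by rw [hE]; exact Metric.isOpen_ball.measurableSet
  have hdisj : Pairwise (Function.onFun Disjoint E) := by
    intro i j hij
    rw [Function.onFun, hE]
    exact Metric.ball_disjoint_ball (by linarith [hsep i j hij])
  obtain ⟨p, hp⟩ : ∃ p : Fin N → Fin N → ℝ,
    p = fun j i => ∫ x, (A x).real (E i) ∂Measure.pi (μ j) := ⟨_, rfl⟩
  have hfm : ∀ i, Measurable fun x => (A x).real (E i) := fun i =>
    (hmeas (E i) (hEm i)).ennreal_toReal
  have hf0 : ∀ i x, 0 ≤ (A x).real (E i) := fun i x => measureReal_nonneg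
  have hf1 : ∀ i x, (A x).real (E i) ≤ 1 := fun i x => by
    have := hA x
    exact measureReal_le_one
  have hfi : ∀ j i, Integrable (fun x => (A x).real (E i)) (Measure.pi (μ j)) := fun j i =>
    Integrable.of_bound (hfm i).aestronglyMeasurable 1
      (Filter.Eventually.of_forall fun z => by
        rw [Real.norm_eq_abs, abs_of_nonneg (hf0 _ _)]; exact hf1 _ _)
  have hdpr : ∀ i, ∀ x x' : Fin n → Ω, (∃ i, ∀ j, j ≠ i → x j = x' j) →
      (A x).real (E i) ≤ Real.exp ε * (A x').real (E i) + δ := by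
    intro i x x' hxx
    have h1 := hdp x x' hxx (E i) (hEm i)
    have := hA x
    have := hA x'
    have h2 := ENNReal.toReal_mono (by finiteness) h1
    rw [ENNReal.toReal_add (by finiteness) (by finiteness), ENNReal.toReal_mul,
      ENNReal.toReal_ofReal (Real.exp_pos _).le, ENNReal.toReal_ofReal hδ0] at h2
    exact h2
  have hkey : ∀ i j, i ≠ j →
      Real.exp (-(2 * ε * t₀)) * ((1 + 2 * ε * t₀) * p i i - ε * t₀) ≤
        p j i + δ / (Real.exp ε - 1) := by
    intro i j hij
    rw [hp]
    exact dp_coupling_aux (μ i) (μ j) t₀ ε δ hε hδ0 (htv i j hij) _ (hfm i) (hf0 i) (hf1 i)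
      (hdpr i)
  have hsum : ∀ j, ∑ i, p j i ≤ 1 := by
    intro j
    rw [hp]
    simp only []
    rw [← integral_finsetSum _ fun i _ => hfi j i]
    have : ∀ x, ∑ i, (A x).real (E i) ≤ 1 := by
      intro x
      have := hA x
      rw [← measureReal_biUnion_finset (fun i _ j _ hij => hdisj hij) (fun i _ => hEm i)]
      exact measureReal_le_one
    calc _ ≤ ∫ x, (1 : ℝ) ∂Measure.pi (μ j) :=
          integral_mono (integrable_finsetSum _ fun i _ => hfi j i) (integrable_const _) this
      _ = 1 := by simp
  have hrisk : ∀ i, ENNReal.ofReal (ρ₀ / 2 * (1 - p i i)) ≤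
      ∫⁻ x, (∫⁻ a, ENNReal.ofReal (dist a (θ i)) ∂A x) ∂Measure.pi (μ i) := by
    intro i
    have h1 : ρ₀ / 2 * (1 - p i i) =
        ∫ x, ρ₀ / 2 * (1 - (A x).real (E i)) ∂Measure.pi (μ i) := by
      rw [integral_const_mul, integral_sub (integrable_const _) (hfi i i), hp]
      simp
    have hint : Integrable (fun x => ρ₀ / 2 * (1 - (A x).real (E i))) (Measure.pi (μ i)) :=
      ((integrable_const _).sub (hfi i i)).const_mul _
    rw [h1, ofReal_integral_eq_lintegral_ofReal hint
      (Filter.Eventually.of_forall fun x =>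
        mul_nonneg (by linarith) (sub_nonneg.2 (hf1 i x)))]
    refine lintegral_mono fun x => ?_
    have := hA x
    rw [ENNReal.ofReal_mul (by linarith), ← probReal_compl_eq_one_sub (hEm i), ofReal_measureReal]
    calc ENNReal.ofReal (ρ₀ / 2) * A x (E i)ᶜ = ∫⁻ a in (E i)ᶜ, ENNReal.ofReal (ρ₀ / 2) ∂A x := by
          rw [setLIntegral_const]
      _ ≤ ∫⁻ a in (E i)ᶜ, ENNReal.ofReal (dist a (θ i)) ∂A x := by
          refine setLIntegral_mono' (hEm i).compl fun a ha => ENNReal.ofReal_le_ofReal ?_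
          rw [hE] at ha
          simpa using ha
      _ ≤ _ := setLIntegral_le_lintegral _ _
  suffices h : ∃ i, ρ₀ / 4 * min 1 (((N : ℝ) - 1) / Real.exp (4 * ε * t₀)) *
        (1 - 2 * δ * Real.exp (4 * ε * t₀) / (Real.exp ε - 1)) ≤ ρ₀ / 2 * (1 - p i i) by
    obtain ⟨i, hi⟩ := h
    exact (ENNReal.ofReal_le_ofReal hi).trans ((hrisk i).trans
      (le_iSup (fun i : Fin N =>
        ∫⁻ x, (∫⁻ a, ENNReal.ofReal (dist a (θ i)) ∂A x) ∂Measure.pi (μ i)) i))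
  have he1 : 0 < Real.exp ε - 1 := by linarith [Real.add_one_lt_exp hε.ne']
  have hc0 : 0 ≤ δ / (Real.exp ε - 1) := div_nonneg hδ0 he1.le
  have hK := Real.exp_pos (4 * ε * t₀)
  have hN1 : (0 : ℝ) ≤ (N : ℝ) - 1 := by
    have : (1 : ℝ) ≤ N := by exact_mod_cast hN
    linarith
  have hFeq : 2 * δ * Real.exp (4 * ε * t₀) / (Real.exp ε - 1)
      = 2 * (δ / (Real.exp ε - 1)) * Real.exp (4 * ε * t₀) := by ring
  rw [hFeq]
  generalize δ / (Real.exp ε - 1) = c at *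
  obtain ⟨M, hM⟩ : ∃ M, M = min 1 (((N : ℝ) - 1) / Real.exp (4 * ε * t₀)) := ⟨_, rfl⟩
  have hM0 : 0 ≤ M := by rw [hM]; exact le_min zero_le_one (div_nonneg hN1 hK.le)
  have hM1 : M ≤ 1 := by rw [hM]; exact min_le_left _ _
  have hM2 : M ≤ ((N : ℝ) - 1) / Real.exp (4 * ε * t₀) := by rw [hM]; exact min_le_right _ _
  rw [← hM]
  have hp1 : ∀ i, p i i ≤ 1 := fun i => by
    refine le_trans ?_ (hsum i)
    refine Finset.single_le_sum (f := fun k => p i k) (fun k _ => ?_) (Finset.mem_univ i)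
    rw [hp]
    exact integral_nonneg (hf0 k)
  by_cases hF : 1 - 2 * c * Real.exp (4 * ε * t₀) ≤ 0
  · refine ⟨⟨0, hN⟩, ?_⟩
    have h1 : ρ₀ / 4 * M * (1 - 2 * c * Real.exp (4 * ε * t₀)) ≤ 0 :=
      mul_nonpos_of_nonneg_of_nonpos (by positivity) hF
    have h2 : 0 ≤ ρ₀ / 2 * (1 - p ⟨0, hN⟩ ⟨0, hN⟩) :=
      mul_nonneg (by linarith) (sub_nonneg.2 (hp1 _))
    linarith
  push Not at hF
  by_cases hh : ∃ i, p i i ≤ 1 / 2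
  · obtain ⟨i, hi⟩ := hh
    refine ⟨i, ?_⟩
    have hF1 : 1 - 2 * c * Real.exp (4 * ε * t₀) ≤ 1 := by
      have : 0 ≤ 2 * c * Real.exp (4 * ε * t₀) := by positivity
      linarith
    have h1 : M * (1 - 2 * c * Real.exp (4 * ε * t₀)) ≤ 1 := mul_le_one₀ hM1 hF.le hF1
    nlinarith
  push Not at hh
  obtain ⟨j, hj⟩ : ∃ j : Fin N, j = ⟨0, hN⟩ := ⟨_, rfl⟩
  refine ⟨j, ?_⟩
  have hlow : ∀ i, i ≠ j → Real.exp (-(4 * ε * t₀)) / 2 - c ≤ p j i := by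
    intro i hij
    have h1 := hkey i j hij
    have h2 : Real.exp (-(4 * ε * t₀)) ≤ Real.exp (-(2 * ε * t₀)) := by
      apply Real.exp_le_exp.2
      nlinarith [mul_pos hε ht₀]
    have h3 : (1 : ℝ) / 2 ≤ (1 + 2 * ε * t₀) * p i i - ε * t₀ := by
      nlinarith [mul_pos hε ht₀, hh i]
    have h4 := mul_le_mul_of_nonneg_left h3 (Real.exp_pos (-(2 * ε * t₀))).le
    linarith
  have hs := hsum j
  rw [← Finset.add_sum_erase _ _ (Finset.mem_univ j)] at hs
  have hs2 : ((N : ℝ) - 1) * (Real.exp (-(4 * ε * t₀)) / 2 - c) ≤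
      ∑ i ∈ Finset.univ.erase j, p j i := by
    have := Finset.card_nsmul_le_sum (Finset.univ.erase j) (fun i => p j i)
      (Real.exp (-(4 * ε * t₀)) / 2 - c) (fun i hi => hlow i (Finset.ne_of_mem_erase hi))
    rw [Finset.card_erase_of_mem (Finset.mem_univ j), Finset.card_univ, Fintype.card_fin,
      nsmul_eq_mul, Nat.cast_sub hN, Nat.cast_one] at this
    exact this
  have hfin : ((N : ℝ) - 1) * (Real.exp (-(4 * ε * t₀)) / 2 - c) =
      1 / 2 * (((N : ℝ) - 1) / Real.exp (4 * ε * t₀) *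
        (1 - 2 * c * Real.exp (4 * ε * t₀))) := by
    rw [Real.exp_neg]; field_simp
  have hMF := mul_le_mul_of_nonneg_right hM2 hF.le
  have h9 : 1 / 2 * (M * (1 - 2 * c * Real.exp (4 * ε * t₀))) ≤ 1 - p j j := by linarith
  have h10 := mul_le_mul_of_nonneg_left h9 (by linarith : (0 : ℝ) ≤ ρ₀ / 2)
  linarith
end
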